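/- arXiv:2304.01338 — 2 statements merged into one kernel-verified Lean document; each statement's English description precedes it below -/
import Mathlib

section
/- Let U ⊆ ℝⁿ be an open neighborhood of the origin and F : U → ℝ an arc-analytic function. Suppose there is a finite composite σ̄ : ℝⁿ → ℝⁿ of elementary monomial coordinate changes such that F∘σ̄ is real analytic at the origin, and suppose F satisfies the monomial curve condition at 0. Then F is real analytic at the origin. -/
/-- An elementary monomial coordinate change on `ℝⁿ`: either a permutation of the
coordinates, or, for an index `r` with (1-based) `1 < r ≤ n` (i.e. `0 < (r : ℕ)` in the
0-based indexing), the map `(x₁, …, xₙ) ↦ (x₁xᵣ, …, x_{r−1}xᵣ, xᵣ, x_{r+1}, …, xₙ)`. -/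
def IsElemMonomialChange {n : ℕ} (σ : (Fin n → ℝ) → (Fin n → ℝ)) : Prop :=
  (∃ e : Equiv.Perm (Fin n), σ = fun x i => x (e i)) ∨
  (∃ r : Fin n, 0 < (r : ℕ) ∧ σ = fun x i => if i < r then x i * x r else x i)

/-- `F` is arc-analytic on `U`: for every real analytic curve `φ : ℝ → ℝⁿ` and every `t₀`
with `φ t₀ ∈ U`, the composite `F ∘ φ` is real analytic at `t₀`. -/
def ArcAnalyticOn {n : ℕ} (U : Set (Fin n → ℝ)) (F : (Fin n → ℝ) → ℝ) : Prop :=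
  ∀ φ : ℝ → (Fin n → ℝ), (∀ t : ℝ, AnalyticAt ℝ φ t) →
    ∀ t₀ : ℝ, φ t₀ ∈ U → AnalyticAt ℝ (fun t => F (φ t)) t₀

/-- `F` satisfies the monomial curve condition at `0`. -/
def MonomialCurveCondition {n : ℕ} (F : (Fin n → ℝ) → ℝ) : Prop :=
  ∀ m : Fin n → ℕ, (∀ i, 0 < m i) →
    ∃ p : FormalMultilinearSeries ℝ ℝ ℝ,
      HasFPowerSeriesAt (fun t : ℝ => F (fun i => t ^ m i)) p 0 ∧
      ∀ k ∉ AddSubmonoid.closure (Set.range m), p.coeff k = 0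

/-!
A composite of elementary monomial changes is a monomial map `Φ x = (x ^ A₁, …, x ^ Aₙ)` whose
exponent matrix `A` is invertible over `ℝ`. Expand `F ∘ Φ = ∑ g β x ^ β` near the origin. On a curve
`x j = t ^ l j` the map `Φ` is again a monomial curve `t ^ (A l) i`, so the curve condition kills
the coefficients of `t ^ k` for `k` outside the submonoid generated by `A l`. Given `β`, weights `l`
can be chosen so that no other exponent has the same weight `β ⬝ l`; hence `g β = 0` unless
`β = α A` for some `α`. The surviving terms `g (α A) x ^ (α A) = g (α A) (Φ x) ^ α` form a
convergent power series `f` evaluated at `Φ x`, whence `F = f` on the image of `Φ`.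

In logarithmic coordinates `Φ` is linear, so it maps the positive part of a small box onto an open
set, which has the origin in its closure. Every point near the origin is joined to this set by a
segment, along which both `F` and `f` are analytic, and the identity theorem gives `F = f` there.
-/

open Filter Topology

variable {ι κ : Type*}

section MonomialMap

/-- The multi-index power `x ^ α = ∏ i, x i ^ α i`. -/
def multiPow {R : Type*} [Fintype ι] [CommMonoid R] (x : ι → R) (α : ι → ℕ) : R :=
  ∏ i, x i ^ α i

/-- The monomial map `R ^ κ → R ^ ι` with exponent matrix `A`: the `i`-th coordinate of the image
of `x` is the multi-index power of `x` whose exponent is the `i`-th row of `A`. -/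
def monomialMap {R : Type*} [Fintype κ] [CommMonoid R] (A : Matrix ι κ ℕ) (x : κ → R) : ι → R :=
  fun i ↦ multiPow x (A i)

section CommMonoid

variable {R : Type*} [CommMonoid R] [Fintype κ]

theorem multiPow_add (x : κ → R) (α β : κ → ℕ) :
    multiPow x (α + β) = multiPow x α * multiPow x β := by
  simp [multiPow, pow_add, Finset.prod_mul_distrib]

theorem multiPow_single [DecidableEq κ] (x : κ → R) (j : κ) :
    multiPow x (Pi.single j 1) = x j := by
  simp [multiPow, Pi.single_apply, pow_ite]

theorem multiPow_monomialMap [Fintype ι] (A : Matrix ι κ ℕ) (x : κ → R) (α : ι → ℕ) :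
    multiPow (monomialMap A x) α = multiPow x (Matrix.vecMul α A) := by
  simp only [multiPow, monomialMap, Matrix.vecMul, dotProduct, ← Finset.prod_pow,
    ← Finset.prod_pow_eq_pow_sum, ← pow_mul, mul_comm (α _)]
  exact Finset.prod_comm

theorem multiPow_pow (t : R) (l α : κ → ℕ) :
    multiPow (fun j ↦ t ^ l j) α = t ^ (α ⬝ᵥ l) := by
  simp only [multiPow, dotProduct, ← pow_mul, mul_comm (l _), Finset.prod_pow_eq_pow_sum]

theorem monomialMap_pow (A : Matrix ι κ ℕ) (t : R) (l : κ → ℕ) :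
    monomialMap A (fun j ↦ t ^ l j) = fun i ↦ t ^ (A.mulVec l) i :=
  funext fun i ↦ multiPow_pow t l (A i)

theorem monomialMap_one [DecidableEq κ] : monomialMap (R := R) (1 : Matrix κ κ ℕ) = id := by
  funext x j
  simp [monomialMap, Matrix.one_eq_pi_single, multiPow, Pi.single_apply, pow_ite]

theorem monomialMap_mul {μ : Type*} [Fintype μ] (A : Matrix ι κ ℕ) (B : Matrix κ μ ℕ) :
    monomialMap (R := R) (A * B) = monomialMap A ∘ monomialMap B :=
  funext₂ fun x i ↦ (multiPow_monomialMap B x (A i)).symm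

theorem continuous_monomialMap [TopologicalSpace R] [ContinuousMul R] (A : Matrix ι κ ℕ) :
    Continuous (monomialMap (R := R) A) :=
  continuous_pi fun i ↦ continuous_finsetProd _ fun j _ ↦ (continuous_apply j).pow (A i j)

end CommMonoid

variable [Fintype κ]

theorem monomialMap_zero {R : Type*} [CommMonoidWithZero R] {A : Matrix ι κ ℕ}
    (hA : ∀ i, A i ≠ 0) : monomialMap A (0 : κ → R) = 0 := by
  funext i
  obtain ⟨j, hj⟩ := Function.ne_iff.1 (hA i)
  exact Finset.prod_eq_zero (Finset.mem_univ j) (zero_pow hj)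

theorem multiPow_pos {R : Type*} [CommSemiring R] [PartialOrder R] [IsStrictOrderedRing R]
    {x : κ → R} (hx : ∀ j, 0 < x j) (α : κ → ℕ) : 0 < multiPow x α :=
  Finset.prod_pos fun j _ ↦ pow_pos (hx j) _

theorem norm_multiPow_le {𝕜 : Type*} [NormedField 𝕜] {x : κ → 𝕜} {ρ : κ → ℝ}
    (hx : ∀ j, ‖x j‖ ≤ ρ j) (α : κ → ℕ) : ‖multiPow x α‖ ≤ multiPow ρ α := by
  simp only [multiPow, norm_prod, norm_pow]
  gcongr with j
  exact hx j

theorem monomialMap_comp_exp (A : Matrix ι κ ℕ) :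
    monomialMap A ∘ Pi.map (fun _ ↦ Real.exp) =
      Pi.map (fun _ ↦ Real.exp) ∘ (A.map (Nat.cast : ℕ → ℝ)).mulVec := by
  funext u i
  simp [monomialMap, multiPow, Matrix.mulVec, dotProduct, Real.exp_sum, Real.exp_nat_mul]

end MonomialMap

section IndependentRows

theorem row_ne_zero_of_linearIndependent_row {R : Type*} [Semiring R] [Nontrivial R]
    {A : Matrix ι κ ℕ} (hA : LinearIndependent R (A.map (Nat.cast : ℕ → R)).row) (i : ι) :
    A i ≠ 0 := fun h ↦
  hA.ne_zero i <| funext fun j ↦ by simp [Matrix.row, h]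

theorem vecMul_injective_of_linearIndependent_row [Fintype ι] {R : Type*} [CommRing R] [CharZero R]
    {A : Matrix ι κ ℕ} (hA : LinearIndependent R (A.map (Nat.cast : ℕ → R)).row) :
    Function.Injective fun α : ι → ℕ ↦ Matrix.vecMul α A := by
  intro α β h
  have hcast : (fun i ↦ (α i : R)) = fun i ↦ (β i : R) := by
    refine Matrix.vecMul_injective_iff.2 hA (funext fun j ↦ ?_)
    simpa [Matrix.vecMul, dotProduct] using congrArg (Nat.cast : ℕ → R) (congrFun h j)
  exact funext fun i ↦ Nat.cast_injective (congrFun hcast i)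

theorem mulVec_surjective_of_linearIndependent_row [Finite ι] [Fintype κ] {K : Type*} [Field K]
    {M : Matrix ι κ K} (hM : LinearIndependent K M.row) : Function.Surjective M.mulVec := by
  cases nonempty_fintype ι
  have hrank : Module.finrank K M.mulVecLin.range = Module.finrank K (ι → K) := by
    rw [Module.finrank_pi]
    exact hM.rank_matrix
  exact LinearMap.range_eq_top.1 (Submodule.eq_top_of_finrank_eq hrank)

theorem isOpen_image_monomialMap [Finite ι] [Fintype κ] {A : Matrix ι κ ℕ}
    (hA : LinearIndependent ℝ (A.map (Nat.cast : ℕ → ℝ)).row)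
    {O : Set (κ → ℝ)} (hO : IsOpen O) (hpos : ∀ x ∈ O, ∀ j, 0 < x j) :
    IsOpen (monomialMap A '' O) := by
  have hlog : Pi.map (fun _ ↦ Real.exp) '' (Pi.map (fun _ ↦ Real.exp) ⁻¹' O) = O :=
    Set.image_preimage_eq_of_subset fun x hx ↦
      ⟨fun j ↦ Real.log (x j), funext fun j ↦ Real.exp_log (hpos x hx j)⟩
  have hexp : IsOpenMap (Pi.map fun _ : ι ↦ Real.exp) :=
    .piMap (fun _ ↦ Real.isOpenEmbedding_exp.isOpenMap) (by simp)
  have hlinear : IsOpenMap (A.map (Nat.cast : ℕ → ℝ)).mulVec :=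
    (A.map (Nat.cast : ℕ → ℝ)).mulVecLin.isOpenMap_of_finiteDimensional
      (mulVec_surjective_of_linearIndependent_row hA)
  rw [← hlog, ← Set.image_comp, monomialMap_comp_exp]
  exact hexp.comp hlinear _ (hO.preimage (by fun_prop))

theorem zero_mem_closure_image_monomialMap [Fintype κ] {A : Matrix ι κ ℕ} (hA : ∀ i, A i ≠ 0)
    {ρ : κ → ℝ} (hρ : ∀ j, 0 < ρ j) :
    0 ∈ closure (monomialMap A '' Set.univ.pi fun j ↦ Set.Ioo 0 (ρ j)) := by
  rw [← monomialMap_zero (R := ℝ) hA]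
  refine mem_closure_image (continuous_monomialMap A).continuousAt ?_
  rw [closure_pi_set]
  intro j _
  change (0 : ℝ) ∈ closure (Set.Ioo 0 (ρ j))
  rw [closure_Ioo (hρ j).ne]
  exact Set.left_mem_Icc.2 (hρ j).le

end IndependentRows

section ElementaryChanges

variable {n : ℕ}

theorem exists_monomialMap_eq_permutation (e : Equiv.Perm (Fin n)) :
    ∃ A : Matrix (Fin n) (Fin n) ℕ, IsUnit (A.map (Nat.cast : ℕ → ℝ)) ∧
      monomialMap A = fun (x : Fin n → ℝ) i ↦ x (e i) := by
  refine ⟨(1 : Matrix (Fin n) (Fin n) ℕ).submatrix e (Equiv.refl _), ?_, ?_⟩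
  · rw [← Matrix.submatrix_map, Matrix.map_one _ Nat.cast_zero Nat.cast_one,
      Matrix.isUnit_submatrix_equiv]
    exact isUnit_one
  · funext x i
    exact congrFun₂ monomialMap_one x (e i)

theorem exists_monomialMap_eq_blowup (r : Fin n) :
    ∃ A : Matrix (Fin n) (Fin n) ℕ, IsUnit (A.map (Nat.cast : ℕ → ℝ)) ∧
      monomialMap A = fun (x : Fin n → ℝ) i ↦ if i < r then x i * x r else x i := by
  refine ⟨.of fun i ↦ Pi.single i 1 + if i < r then Pi.single r 1 else 0, ?_, ?_⟩
  · rw [Matrix.isUnit_iff_isUnit_det, Matrix.det_of_isUpperTriangular, Finset.prod_eq_one]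
    · exact isUnit_one
    · intro i _
      by_cases hi : i < r
      · simp [hi, hi.ne]
      · simp [hi]
    · intro i j (hji : j < i)
      by_cases hi : i < r
      · simp [hi, hji.ne, (hji.trans hi).ne]
      · simp [hi, hji.ne]
  · funext x i
    change multiPow x (Pi.single i 1 + if i < r then Pi.single r 1 else 0) = _
    by_cases hi : i < r
    · simp [hi, multiPow_add, multiPow_single]
    · simp [hi, multiPow_single]

theorem IsElemMonomialChange.exists_eq_monomialMap {σ : (Fin n → ℝ) → Fin n → ℝ}
    (hσ : IsElemMonomialChange σ) :
    ∃ A : Matrix (Fin n) (Fin n) ℕ, IsUnit (A.map (Nat.cast : ℕ → ℝ)) ∧ monomialMap A = σ := by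
  rcases hσ with ⟨e, rfl⟩ | ⟨r, -, rfl⟩
  · exact exists_monomialMap_eq_permutation e
  · exact exists_monomialMap_eq_blowup r

theorem exists_monomialMap_eq_foldr_comp {L : List ((Fin n → ℝ) → Fin n → ℝ)}
    (hL : ∀ σ ∈ L, IsElemMonomialChange σ) :
    ∃ A : Matrix (Fin n) (Fin n) ℕ,
      IsUnit (A.map (Nat.cast : ℕ → ℝ)) ∧ monomialMap A = L.foldr (· ∘ ·) id := by
  induction L with
  | nil =>
    refine ⟨1, ?_, monomialMap_one⟩
    rw [Matrix.map_one _ Nat.cast_zero Nat.cast_one]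
    exact isUnit_one
  | cons σ L ih =>
    obtain ⟨B, hB, hBL⟩ := ih fun τ hτ ↦ hL τ (List.mem_cons_of_mem σ hτ)
    obtain ⟨A, hA, rfl⟩ := (hL σ List.mem_cons_self).exists_eq_monomialMap
    refine ⟨A * B, ?_, by rw [monomialMap_mul, hBL, List.foldr_cons]⟩
    rw [← Nat.coe_castRingHom, Matrix.map_mul]
    exact hA.mul hB

end ElementaryChanges

section Weights

theorem eq_of_dotProduct_pow_modEq [Fintype ι] {n d : ℕ} (e : ι ≃ Fin n) {α β : ι → ℕ}
    (hα : ∀ i, α i < d) (hβ : ∀ i, β i < d)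
    (h : α ⬝ᵥ (fun i ↦ d ^ (e i : ℕ)) ≡ β ⬝ᵥ (fun i ↦ d ^ (e i : ℕ)) [MOD d ^ n]) : α = β := by
  let digits (γ : ι → ℕ) (hγ : ∀ i, γ i < d) : Fin n → Fin d := fun k ↦ ⟨γ (e.symm k), hγ _⟩
  have hdigits (γ : ι → ℕ) (hγ : ∀ i, γ i < d) :
      (finFunctionFinEquiv (digits γ hγ) : ℕ) = γ ⬝ᵥ fun i ↦ d ^ (e i : ℕ) := by
    rw [finFunctionFinEquiv_apply, dotProduct, ← e.symm.sum_comp]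
    simp [digits]
  rw [← hdigits α hα, ← hdigits β hβ] at h
  have heq := finFunctionFinEquiv.injective
    (Fin.ext (h.eq_of_lt_of_lt (Fin.is_lt _) (Fin.is_lt _)))
  funext i
  simpa [digits] using congrArg Fin.val (congrFun heq (e i))

/-- In the weight `d ^ n + d ^ i` the summand `d ^ n` bounds the total degree of `α`, so that the
entries of `α` are base-`d` digits, which the summands `d ^ i` then recover modulo `d ^ n`. -/
theorem exists_pos_weight_separating [Fintype ι] (β : ι → ℕ) :
    ∃ l : ι → ℕ, (∀ i, 0 < l i) ∧ ∀ α, α ⬝ᵥ l = β ⬝ᵥ l → α = β := by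
  let e := Fintype.equivFin ι
  set n := Fintype.card ι
  set d := 2 * ∑ i, β i + 1
  have hsplit (γ : ι → ℕ) : γ ⬝ᵥ (fun i ↦ d ^ n + d ^ (e i : ℕ)) =
      (∑ i, γ i) * d ^ n + γ ⬝ᵥ fun i ↦ d ^ (e i : ℕ) := by
    simp [dotProduct, mul_add, Finset.sum_add_distrib, Finset.sum_mul]
  refine ⟨fun i ↦ d ^ n + d ^ (e i : ℕ), fun i ↦ by positivity, fun α hα ↦ ?_⟩
  rw [hsplit, hsplit] at hα
  have hdigit : β ⬝ᵥ (fun i ↦ d ^ (e i : ℕ)) ≤ (∑ i, β i) * d ^ n := by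
    rw [Finset.sum_mul]
    exact Finset.sum_le_sum fun i _ ↦
      Nat.mul_le_mul_left _ (Nat.pow_le_pow_right (by omega) (e i).is_lt.le)
  have hdegree : ∑ i, α i ≤ 2 * ∑ i, β i :=
    Nat.le_of_mul_le_mul_right (c := d ^ n) (by linarith) (by positivity)
  have hlt {γ : ι → ℕ} (hγ : ∑ i, γ i < d) (i : ι) : γ i < d :=
    (Finset.single_le_sum (fun _ _ ↦ Nat.zero_le _) (Finset.mem_univ i)).trans_lt hγ
  refine eq_of_dotProduct_pow_modEq e (hlt (by omega)) (hlt (by omega)) ?_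
  simpa [Nat.ModEq] using congrArg (· % d ^ n) hα

end Weights

theorem hasSum_smul_tsum_fiber {β γ R M : Type*} [DivisionRing R] [AddCommGroup M] [Module R M]
    [UniformSpace M] [IsUniformAddGroup M] [CompleteSpace M] [T2Space M] [ContinuousConstSMul R M]
    {a : γ → R} {c : β → M} {s : M} (h : β → γ) (hs : HasSum (fun b ↦ a (h b) • c b) s) :
    HasSum (fun y ↦ a y • ∑' b : h ⁻¹' {y}, c b) s := by
  convert hs.tsum_fiberwise h using 2 with y
  rw [← tsum_const_smul'']
  exact tsum_congr fun b ↦ by rw [Set.mem_singleton_iff.1 b.2]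

theorem summable_mul_norm_tsum_fiber {β γ M : Type*} [NormedAddCommGroup M]
    {a : γ → ℝ} (ha : ∀ y, 0 < a y) {c : β → M} (h : β → γ)
    (hs : Summable fun b ↦ a (h b) * ‖c b‖) :
    Summable fun y ↦ a y * ‖∑' b : h ⁻¹' {y}, c b‖ := by
  refine (hasSum_smul_tsum_fiber (a := a) (c := fun b ↦ ‖c b‖) h hs.hasSum).summable.of_nonneg_of_le
    (fun y ↦ mul_nonneg (ha y).le (norm_nonneg _)) fun y ↦ ?_
  have hfiber : Summable fun b : h ⁻¹' {y} ↦ ‖c b‖ := by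
    refine (summable_mul_left_iff (ha y).ne').1 ((hs.subtype (h ⁻¹' {y})).congr fun b ↦ ?_)
    rw [Function.comp_apply, Set.mem_singleton_iff.1 b.2]
  exact mul_le_mul_of_nonneg_left (norm_tsum_le_tsum_norm hfiber) (ha y).le

section IndexWord

/-- Finite words in the alphabet `ι`, bundled with their length. The word `⟨k, w⟩` stands for the
noncommutative monomial `x (w 0) * ⋯ * x (w (k - 1))`; the words of length `k` index the
coefficients of a `k`-multilinear map on `ι → 𝕜`. -/
abbrev IndexWord (ι : Type*) := Σ k : ℕ, Fin k → ι

/-- The exponent of the commutative monomial underlying a word: how often each letter occurs. -/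
def IndexWord.content [DecidableEq ι] (w : IndexWord ι) (i : ι) : ℕ :=
  (Finset.univ.filter fun j ↦ w.2 j = i).card

theorem IndexWord.multiPow_content [Fintype ι] [DecidableEq ι] {R : Type*} [CommMonoid R]
    (x : ι → R) (w : IndexWord ι) : multiPow x w.content = ∏ j, x (w.2 j) := by
  simp only [multiPow, IndexWord.content, ← Finset.prod_const]
  exact Finset.prod_fiberwise' _ _ _

theorem IndexWord.content_surjective [Finite ι] [DecidableEq ι] :
    Function.Surjective (IndexWord.content (ι := ι)) := by
  cases nonempty_fintype ι
  intro α
  let e := Fintype.equivFin (Σ i, Fin (α i))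
  refine ⟨⟨_, fun j ↦ (e.symm j).1⟩, funext fun i ↦ ?_⟩
  calc (Finset.univ.filter fun j ↦ (e.symm j).1 = i).card
      = Fintype.card {j // (e.symm j).1 = i} := (Fintype.card_subtype _).symm
    _ = Fintype.card {a : Σ i, Fin (α i) // a.1 = i} :=
      Fintype.card_congr (e.symm.subtypeEquiv fun _ ↦ Iff.rfl)
    _ = Fintype.card (Fin (α i)) := Fintype.card_congr (Equiv.sigmaSubtype i)
    _ = α i := Fintype.card_fin _

theorem multilinear_diag_eq_sum_words [Fintype ι] [DecidableEq ι] {R M : Type*} [CommSemiring R]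
    [AddCommMonoid M] [Module R M] {k : ℕ} (p : MultilinearMap R (fun _ : Fin k ↦ ι → R) M)
    (x : ι → R) :
    p (fun _ ↦ x) = ∑ w : Fin k → ι, (∏ j, x (w j)) • p fun j ↦ Pi.single (w j) 1 := by
  conv_lhs => rw [pi_eq_sum_univ' x, p.map_sum]
  exact Finset.sum_congr rfl fun w _ ↦ p.map_smul_univ _ _

end IndexWord

section MonomialExpansion

open scoped NNReal ENNReal

variable {𝕜 E : Type*} [NontriviallyNormedField 𝕜] [NormedAddCommGroup E] [NormedSpace 𝕜 E]

section Words

/-- The coefficient of a formal multilinear series on `ι → 𝕜` at a word, that is, its value on the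
corresponding tuple of standard basis vectors. -/
def wordCoeff [DecidableEq ι] [Fintype ι] (p : FormalMultilinearSeries 𝕜 (ι → 𝕜) E)
    (w : IndexWord ι) : E :=
  p w.1 fun j ↦ Pi.single (w.2 j) 1

/-- The formal multilinear series on `ι → 𝕜` with prescribed coefficients at all words. -/
noncomputable def wordSeries [Fintype ι] (c : IndexWord ι → E) :
    FormalMultilinearSeries 𝕜 (ι → 𝕜) E := fun k ↦
  ∑ w : Fin k → ι, ((ContinuousMultilinearMap.mkPiAlgebra 𝕜 (Fin k) 𝕜).compContinuousLinearMap
    fun j ↦ ContinuousLinearMap.proj (w j)).smulRight (c ⟨k, w⟩)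

variable [Fintype ι]

theorem norm_wordCoeff_le [DecidableEq ι] (p : FormalMultilinearSeries 𝕜 (ι → 𝕜) E)
    (w : IndexWord ι) : ‖wordCoeff p w‖ ≤ ‖p w.1‖ := by
  simpa [wordCoeff, Pi.norm_single] using (p w.1).le_opNorm fun j ↦ Pi.single (w.2 j) 1

theorem wordSeries_apply_diag (c : IndexWord ι → E) (k : ℕ) (x : ι → 𝕜) :
    wordSeries c k (fun _ ↦ x) = ∑ w : Fin k → ι, (∏ j, x (w j)) • c ⟨k, w⟩ := by
  simp [wordSeries]

theorem norm_wordSeries_le (c : IndexWord ι → E) (k : ℕ) :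
    ‖wordSeries (𝕜 := 𝕜) c k‖ ≤ ∑ w : Fin k → ι, ‖c ⟨k, w⟩‖ := by
  refine norm_sum_le_of_le _ fun w _ ↦ ?_
  rw [ContinuousMultilinearMap.norm_smulRight]
  refine mul_le_of_le_one_left (norm_nonneg _) ?_
  refine ContinuousMultilinearMap.opNorm_le_bound zero_le_one fun m ↦ ?_
  simp only [ContinuousMultilinearMap.compContinuousLinearMap_apply,
    ContinuousMultilinearMap.mkPiAlgebra_apply, norm_prod, one_mul]
  gcongr with j
  exact norm_le_pi_norm (m j) (w j)

theorem summable_multiPow_content_mul_norm_wordCoeff [DecidableEq ι]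
    {p : FormalMultilinearSeries 𝕜 (ι → 𝕜) E} {ρ : ι → ℝ≥0}
    (hρ : ((∑ i, ρ i : ℝ≥0) : ℝ≥0∞) < p.radius) :
    Summable fun w : IndexWord ι ↦ multiPow (fun i ↦ (ρ i : ℝ)) w.content * ‖wordCoeff p w‖ := by
  have hbound : Summable fun w : IndexWord ι ↦ (∏ j, (ρ (w.2 j) : ℝ)) * ‖p w.1‖ := by
    refine (summable_sigma_of_nonneg fun w ↦ by positivity).2 ⟨fun k ↦ .of_finite, ?_⟩
    refine (p.summable_norm_mul_pow hρ).congr fun k ↦ ?_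
    rw [tsum_fintype, NNReal.coe_sum, Fintype.sum_pow, mul_comm]
    exact Finset.sum_mul ..
  refine hbound.of_nonneg_of_le (fun w ↦ ?_) fun w ↦ ?_
  · rw [IndexWord.multiPow_content]
    positivity
  · rw [IndexWord.multiPow_content]
    gcongr
    exact norm_wordCoeff_le p w

theorem hasFPowerSeriesOnBall_wordSeries {f : (ι → 𝕜) → E} {c : IndexWord ι → E} {r : ℝ≥0}
    (hr : 0 < r) (hc : Summable fun w ↦ ‖c w‖ * (r : ℝ) ^ w.1)
    (hf : ∀ x ∈ Metric.ball 0 (r : ℝ), HasSum (fun w ↦ (∏ j, x (w.2 j)) • c w) (f x)) :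
    HasFPowerSeriesOnBall f (wordSeries (𝕜 := 𝕜) c) 0 r where
  r_le := by
    refine FormalMultilinearSeries.le_radius_of_summable _ <|
      hc.sigma.of_nonneg_of_le (fun k ↦ by positivity) fun k ↦ ?_
    rw [tsum_fintype]
    change _ ≤ ∑ w : Fin k → ι, ‖c ⟨k, w⟩‖ * (r : ℝ) ^ k
    rw [← Finset.sum_mul]
    gcongr
    exact norm_wordSeries_le c k
  r_pos := by exact_mod_cast hr
  hasSum := by
    intro x hx
    rw [Metric.eball_coe] at hx
    rw [zero_add]
    refine (hf x hx).sigma fun k ↦ ?_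
    rw [wordSeries_apply_diag]
    exact hasSum_fintype _

end Words

/-- `f` is the sum of the multi-index power series with coefficients `g`, which converges
absolutely on the closed polydisc of polyradius `ρ`. -/
structure HasMonomialExpansion [Fintype ι] (f : (ι → 𝕜) → E) (g : (ι → ℕ) → E) (ρ : ι → ℝ) :
    Prop where
  pos : ∀ i, 0 < ρ i
  summable : Summable fun α ↦ multiPow ρ α * ‖g α‖
  hasSum : ∀ x, (∀ i, ‖x i‖ ≤ ρ i) → HasSum (fun α ↦ multiPow x α • g α) (f x)

variable [Fintype ι]

theorem summable_multiPow_smul [CompleteSpace E] {β : Type*} {a : β → ι → ℕ} {c : β → E} {ρ : ι → ℝ}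
    (hc : Summable fun b ↦ multiPow ρ (a b) * ‖c b‖) {x : ι → 𝕜} (hx : ∀ i, ‖x i‖ ≤ ρ i) :
    Summable fun b ↦ multiPow x (a b) • c b :=
  .of_norm_bounded hc fun b ↦ by
    rw [norm_smul]
    gcongr
    exact norm_multiPow_le hx (a b)

theorem hasMonomialExpansion_tsum [CompleteSpace E] {g : (ι → ℕ) → E} {ρ : ι → ℝ}
    (hρ : ∀ i, 0 < ρ i) (hg : Summable fun α ↦ multiPow ρ α * ‖g α‖) :
    HasMonomialExpansion (fun x : ι → 𝕜 ↦ ∑' α, multiPow x α • g α) g ρ where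
  pos := hρ
  summable := hg
  hasSum _ hx := (summable_multiPow_smul hg hx).hasSum

theorem hasMonomialExpansion_of_hasFPowerSeriesOnBall [DecidableEq ι] [CompleteSpace E]
    {f : (ι → 𝕜) → E} {p : FormalMultilinearSeries 𝕜 (ι → 𝕜) E} {r : ℝ≥0∞}
    (hf : HasFPowerSeriesOnBall f p 0 r) {ρ : ι → ℝ≥0} (hρ : ∀ i, 0 < ρ i)
    (hρr : ((∑ i, ρ i : ℝ≥0) : ℝ≥0∞) < r) :
    HasMonomialExpansion f (fun α ↦ ∑' w : IndexWord.content ⁻¹' {α}, wordCoeff p w)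
      (fun i ↦ ρ i) where
  pos i := NNReal.coe_pos.2 (hρ i)
  summable := summable_mul_norm_tsum_fiber
    (multiPow_pos fun i ↦ NNReal.coe_pos.2 (hρ i)) _
    (summable_multiPow_content_mul_norm_wordCoeff (hρr.trans_le hf.r_le))
  hasSum x hx := by
    have hxr : x ∈ Metric.eball 0 r := by
      have hxρ : ‖x‖₊ ≤ ∑ i, ρ i := pi_nnnorm_le_iff.2 fun i ↦
        (show ‖x i‖₊ ≤ ρ i from hx i).trans
          (Finset.single_le_sum_of_canonicallyOrdered (Finset.mem_univ i))
      rw [Metric.mem_eball, edist_zero_right]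
      exact (ENNReal.coe_le_coe.2 hxρ).trans_lt hρr
    have hsum : HasSum (fun k ↦ p k fun _ ↦ x) (f x) := by simpa using hf.hasSum hxr
    refine hasSum_smul_tsum_fiber IndexWord.content <| hsum.sigma_of_hasSum (fun k ↦ ?_) <|
      summable_multiPow_smul
        (summable_multiPow_content_mul_norm_wordCoeff (hρr.trans_le hf.r_le)) hx
    rw [← ContinuousMultilinearMap.coe_coe, multilinear_diag_eq_sum_words]
    simp only [IndexWord.multiPow_content]
    exact hasSum_fintype _

theorem exists_hasMonomialExpansion_of_analyticAt [CompleteSpace E] {f : (ι → 𝕜) → E}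
    (hf : AnalyticAt 𝕜 f 0) : ∃ g ρ, HasMonomialExpansion f g ρ := by
  classical
  obtain ⟨p, r, hp⟩ := hf
  obtain ⟨R, hR, hRr⟩ := ENNReal.lt_iff_exists_nnreal_btwn.1 hp.r_pos
  refine ⟨_, _, hasMonomialExpansion_of_hasFPowerSeriesOnBall hp
    (ρ := fun _ ↦ R / (Fintype.card ι + 1)) (fun _ ↦ ?_) (lt_of_le_of_lt ?_ hRr)⟩
  · have : 0 < R := by exact_mod_cast hR
    positivity
  · rw [ENNReal.coe_le_coe, Finset.sum_const, Finset.card_univ, nsmul_eq_mul, mul_div_left_comm]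
    exact mul_le_of_le_one_right' (div_le_one_of_le₀ (by simp) (by positivity))

namespace HasMonomialExpansion

variable {f : (ι → 𝕜) → E} {g : (ι → ℕ) → E} {ρ : ι → ℝ}

protected theorem analyticAt (h : HasMonomialExpansion f g ρ) : AnalyticAt 𝕜 f 0 := by
  classical
  obtain ⟨r, hrρ, hr⟩ : ∃ r : ℝ, (∀ i, r ≤ ρ i) ∧ 0 < r :=
    (((eventually_all.2 fun i ↦ eventually_le_nhds (h.pos i)).filter_mono
      nhdsWithin_le_nhds).and (self_mem_nhdsWithin (s := Set.Ioi 0))).exists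
  lift r to ℝ≥0 using hr.le
  let word : (ι → ℕ) → IndexWord ι := Function.surjInv IndexWord.content_surjective
  have hcontent (α) : (word α).content = α := Function.surjInv_eq _ α
  have hword : Function.Injective word := Function.injective_surjInv _
  have hextend (α) : Function.extend word g 0 (word α) = g α := hword.extend_apply g 0 α
  refine (hasFPowerSeriesOnBall_wordSeries (c := Function.extend word g 0) (r := r)
    (by exact_mod_cast hr) ?_ fun x hx ↦ ?_).analyticAt
  · refine (hword.summable_iff fun w hw ↦ by simp [Function.extend_apply' _ _ _ hw]).1 <|
      h.summable.of_nonneg_of_le (fun α ↦ by dsimp; positivity) fun α ↦ ?_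
    rw [Function.comp_apply, hextend, mul_comm]
    gcongr
    calc (r : ℝ) ^ (word α).1 = ∏ _j : Fin (word α).1, (r : ℝ) := by simp
      _ ≤ ∏ j, ρ ((word α).2 j) := by gcongr with j; exact hrρ _
      _ = multiPow ρ α := by rw [← IndexWord.multiPow_content, hcontent]
  · refine (hword.hasSum_iff fun w hw ↦ by simp [Function.extend_apply' _ _ _ hw]).1 ?_
    have hxρ (i) : ‖x i‖ ≤ ρ i :=
      (norm_le_pi_norm x i).trans ((mem_ball_zero_iff.1 hx).le.trans (hrρ i))
    convert h.hasSum x hxρ using 2 with α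
    rw [Function.comp_apply, hextend, ← IndexWord.multiPow_content, hcontent]

theorem coeff_comp_pow_eq_tsum [CompleteSpace E] (h : HasMonomialExpansion f g ρ) {l : ι → ℕ}
    (hl : ∀ j, 0 < l j) {p : FormalMultilinearSeries 𝕜 𝕜 E}
    (hp : HasFPowerSeriesAt (fun t ↦ f fun j ↦ t ^ l j) p 0) (k : ℕ) :
    p.coeff k = ∑' α : (· ⬝ᵥ l) ⁻¹' {k}, g α := by
  let q : FormalMultilinearSeries 𝕜 𝕜 E := fun k ↦
    ContinuousMultilinearMap.mkPiRing 𝕜 (Fin k) (∑' α : (· ⬝ᵥ l) ⁻¹' {k}, g α)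
  have hq (k) : q.coeff k = ∑' α : (· ⬝ᵥ l) ⁻¹' {k}, g α := by
    simp [q, FormalMultilinearSeries.coeff]
  have hnear : ∀ᶠ t : 𝕜 in 𝓝 0, ∀ j, ‖t ^ l j‖ ≤ ρ j := eventually_all.2 fun j ↦
    (continuous_norm.comp (continuous_pow (l j))).continuousAt.eventually_le_const
      (by simp [(hl j).ne', h.pos j])
  have hfq : HasFPowerSeriesAt (fun t ↦ f fun j ↦ t ^ l j) q 0 := by
    refine hasFPowerSeriesAt_iff.2 (hnear.mono fun t ht ↦ ?_)
    simp only [hq, zero_add]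
    refine hasSum_smul_tsum_fiber (a := fun k ↦ t ^ k) _ ?_
    simpa only [multiPow_pow] using h.hasSum _ ht
  rw [hp.eq_formalMultilinearSeries hfq, hq]

theorem exists_eq_comp_monomialMap [CompleteSpace E] [Fintype κ] {F : (ι → 𝕜) → E}
    {A : Matrix ι κ ℕ} {g : (κ → ℕ) → E} {ρ : κ → ℝ}
    (h : HasMonomialExpansion (F ∘ monomialMap A) g ρ)
    (hA : Function.Injective fun α ↦ Matrix.vecMul α A)
    (hg : ∀ β ∉ Set.range fun α ↦ Matrix.vecMul α A, g β = 0) :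
    ∃ f, HasMonomialExpansion f (fun α ↦ g (Matrix.vecMul α A)) (monomialMap A ρ) ∧
      ∀ x, (∀ j, ‖x j‖ ≤ ρ j) → F (monomialMap A x) = f (monomialMap A x) := by
  have hsummable : Summable fun α ↦ multiPow (monomialMap A ρ) α * ‖g (Matrix.vecMul α A)‖ := by
    simp only [multiPow_monomialMap]
    exact h.summable.comp_injective hA
  have hf := hasMonomialExpansion_tsum (𝕜 := 𝕜) (fun i ↦ multiPow_pos h.pos (A i)) hsummable
  refine ⟨_, hf, fun x hx ↦ HasSum.unique ?_ (hf.hasSum _ fun i ↦ norm_multiPow_le hx (A i))⟩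
  simp only [multiPow_monomialMap]
  exact (hA.hasSum_iff fun β hβ ↦ by simp [hg β hβ]).2 (h.hasSum x hx)

end HasMonomialExpansion

end MonomialExpansion

theorem MonomialCurveCondition.coeff_eq_zero {n : ℕ} [Fintype κ] {F : (Fin n → ℝ) → ℝ}
    (hF : MonomialCurveCondition F) {A : Matrix (Fin n) κ ℕ} (hA : ∀ i, A i ≠ 0)
    {g : (κ → ℕ) → ℝ} {ρ : κ → ℝ} (h : HasMonomialExpansion (F ∘ monomialMap A) g ρ)
    {β : κ → ℕ} (hβ : β ∉ Set.range fun α ↦ Matrix.vecMul α A) : g β = 0 := by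
  obtain ⟨l, hl, hsep⟩ := exists_pos_weight_separating β
  have hm (i) : 0 < A.mulVec l i := by
    obtain ⟨j, hj⟩ := Function.ne_iff.1 (hA i)
    exact Finset.sum_pos' (fun _ _ ↦ Nat.zero_le _)
      ⟨j, Finset.mem_univ j, Nat.mul_pos (Nat.pos_of_ne_zero hj) (hl j)⟩
  obtain ⟨p, hp, hgap⟩ := hF (A.mulVec l) hm
  have hnot : β ⬝ᵥ l ∉ AddSubmonoid.closure (Set.range (A.mulVec l)) := by
    rw [AddSubmonoid.mem_closure_range_iff_of_fintype]
    rintro ⟨α, hα⟩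
    refine hβ ⟨α, hsep _ ?_⟩
    rw [← Matrix.dotProduct_mulVec, hα]
    simp [dotProduct]
  simp only [← monomialMap_pow] at hp
  have hfiber : (· ⬝ᵥ l) ⁻¹' {β ⬝ᵥ l} = {β} :=
    Set.ext fun α ↦ ⟨hsep α, fun hα ↦ congrArg (· ⬝ᵥ l) hα⟩
  rw [← hgap _ hnot, h.coeff_comp_pow_eq_tsum hl hp, hfiber, tsum_singleton]

section LineAnalytic

variable {E G : Type*} [NormedAddCommGroup E] [NormedSpace ℝ E] [NormedAddCommGroup G]
  [NormedSpace ℝ G]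

/-- Analyticity of `F` along the part in `U` of every affine line: the form of arc-analyticity that
makes the one-variable identity theorem available along segments. -/
def LineAnalyticOn (U : Set E) (F : E → G) : Prop :=
  ∀ (z v : E) (t : ℝ), z + t • v ∈ U → AnalyticAt ℝ (fun s : ℝ ↦ F (z + s • v)) t

theorem ArcAnalyticOn.lineAnalyticOn {n : ℕ} {U : Set (Fin n → ℝ)} {F : (Fin n → ℝ) → ℝ}
    (hF : ArcAnalyticOn U F) : LineAnalyticOn U F := fun z v t ht ↦
  hF (fun s ↦ z + s • v) (fun _ ↦ by fun_prop) t ht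

theorem LineAnalyticOn.eventuallyEq [CompleteSpace G] {U V : Set E} {F f : E → G} {x₀ : E}
    (hF : LineAnalyticOn U F) (hU : U ∈ 𝓝 x₀) (hf : AnalyticAt ℝ f x₀) (hV : IsOpen V)
    (hx₀ : x₀ ∈ closure V) (hFf : Set.EqOn F f V) : F =ᶠ[𝓝 x₀] f := by
  obtain ⟨ε, hε, hball⟩ := Metric.eventually_nhds_iff_ball.1 (hf.eventually_analyticAt.and hU)
  obtain ⟨z, hzV, hzε⟩ := Metric.mem_closure_iff.1 hx₀ ε hε
  rw [dist_comm] at hzε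
  filter_upwards [Metric.ball_mem_nhds x₀ hε] with y hy
  let line (s : ℝ) : E := z + s • (y - z)
  have hmem {s : ℝ} (hs : s ∈ Set.Icc 0 1) : line s ∈ Metric.ball x₀ ε :=
    (convex_ball x₀ ε).add_smul_sub_mem hzε hy hs
  have hFline : AnalyticOnNhd ℝ (F ∘ line) (Set.Icc 0 1) := fun s hs ↦
    hF z (y - z) s (hball _ (hmem hs)).2
  have hfline : AnalyticOnNhd ℝ (f ∘ line) (Set.Icc 0 1) := fun s hs ↦
    (hball _ (hmem hs)).1.comp (by fun_prop)
  have hnear : F ∘ line =ᶠ[𝓝 0] f ∘ line := by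
    have hV0 : line ⁻¹' V ∈ 𝓝 0 :=
      (hV.preimage (by fun_prop)).mem_nhds (by simpa [line] using hzV)
    exact mem_of_superset hV0 fun s hs ↦ hFf hs
  have hone := hFline.eqOn_of_preconnected_of_eventuallyEq hfline isPreconnected_Icc
    (Set.left_mem_Icc.2 zero_le_one) hnear (Set.right_mem_Icc.2 zero_le_one)
  simpa [line] using hone

end LineAnalytic

theorem analyticAt_of_monomialCurveCondition_of_elemChanges_general {n : ℕ} [Fintype κ]
    {U : Set (Fin n → ℝ)} (hU : U ∈ 𝓝 0) {F : (Fin n → ℝ) → ℝ} (hF : LineAnalyticOn U F)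
    {A : Matrix (Fin n) κ ℕ} (hA : LinearIndependent ℝ (A.map (Nat.cast : ℕ → ℝ)).row)
    (hFA : AnalyticAt ℝ (F ∘ monomialMap A) 0) (hmon : MonomialCurveCondition F) :
    AnalyticAt ℝ F 0 := by
  have hrow := row_ne_zero_of_linearIndependent_row hA
  obtain ⟨g, ρ, hg⟩ := exists_hasMonomialExpansion_of_analyticAt hFA
  obtain ⟨f, hf, hFf⟩ := hg.exists_eq_comp_monomialMap
    (vecMul_injective_of_linearIndependent_row hA) fun β hβ ↦ hmon.coeff_eq_zero hrow hg hβ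
  refine hf.analyticAt.congr (EventuallyEq.symm ?_)
  refine hF.eventuallyEq hU hf.analyticAt (isOpen_image_monomialMap hA
    (isOpen_set_pi Set.finite_univ fun j _ ↦ isOpen_Ioo) fun x hx j ↦ (hx j trivial).1)
    (zero_mem_closure_image_monomialMap hrow hg.pos) ?_
  rintro _ ⟨x, hx, rfl⟩
  refine hFf x fun j ↦ ?_
  rw [Real.norm_of_nonneg (hx j trivial).1.le]
  exact (hx j trivial).2.le

/-- Steps 2 and 3 of the proof of Theorem 1. If `F` is arc-analytic on an
open neighborhood `U` of the origin, becomes real analytic at the origin after a finite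
composite of elementary monomial coordinate changes, and satisfies the monomial curve
condition at `0`, then `F` is real analytic at the origin. -/
theorem analyticAt_of_monomialCurveCondition_of_elemChanges
    (n : ℕ) (U : Set (Fin n → ℝ)) (hU : IsOpen U) (h0 : (0 : Fin n → ℝ) ∈ U)
    (F : (Fin n → ℝ) → ℝ) (harc : ArcAnalyticOn U F)
    (hσ : ∃ L : List ((Fin n → ℝ) → (Fin n → ℝ)),
      (∀ σ ∈ L, IsElemMonomialChange σ) ∧
      AnalyticAt ℝ (F ∘ L.foldr (· ∘ ·) id) 0)
    (hmon : MonomialCurveCondition F) :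
    AnalyticAt ℝ F 0 := by
  obtain ⟨L, hL, hFL⟩ := hσ
  obtain ⟨A, hA, hAL⟩ := exists_monomialMap_eq_foldr_comp hL
  exact analyticAt_of_monomialCurveCondition_of_elemChanges_general (hU.mem_nhds h0)
    harc.lineAnalyticOn (Matrix.linearIndependent_rows_iff_isUnit.2 hA) (hAL ▸ hFL) hmon
end

section
/- Let h₀,…,h_r be real analytic functions on an open neighborhood U of the origin in ℝⁿ, not all having identically zero germ at the origin. Then there exists a finite composite σ̄ : ℝⁿ → ℝⁿ of elementary monomial coordinate changes, an exponent vector d ∈ ℕⁿ, an open neighborhood V of the origin in ℝⁿ with σ̄(V) ⊆ U, and real analytic functions h̃₀,…,h̃_r on V, such that hᵢ(σ̄(z)) = z₁^{d₁}⋯zₙ^{dₙ}·h̃ᵢ(z) for all z ∈ V and all 0 ≤ i ≤ r, and h̃_j(0) ≠ 0 for at least one 0 ≤ j ≤ r. -/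
/-!
Induct on the dimension. Write a point as `(y, t)` with `t` the last coordinate. Since a nonzero
analytic germ is not `O(‖x‖ ^ N)` for every `N`, a maximal power `t ^ m` divides all the `f i`, and
the quotients `g i` do not all vanish on `t = 0`. Induction applied to `g i (y, 0)` gives a
monomial map `σ` with `g i (σ y, 0) = y ^ d * q i y` and some `q j 0 ≠ 0`, so by Hadamard's lemma
`g i (σ y, t) = y ^ d * q i y + t * R i (y, t)`. Replacing `t` by `t * y ^ d`, itself a composite
of elementary changes, turns this into `y ^ d * (q i y + t * R i (y, t * y ^ d))`, whose second
factor equals `q i 0` at the origin.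
-/

open Filter Topology

section Analytic

variable {𝕜 E F : Type*} [NontriviallyNormedField 𝕜]
  [NormedAddCommGroup E] [NormedSpace 𝕜 E] [NormedAddCommGroup F] [NormedSpace 𝕜 F]

theorem eventually_eq_zero_of_forall_isBigO_norm_sub_pow {f : E → F} {x : E}
    (hf : AnalyticAt 𝕜 f x) (hO : ∀ N : ℕ, f =O[𝓝 x] fun y => ‖y - x‖ ^ N) :
    ∀ᶠ y in 𝓝 x, f y = 0 := by
  obtain ⟨p, hp⟩ := hf
  have hO' (N : ℕ) : (fun y => f (x + y)) =O[𝓝 0] fun y => ‖y‖ ^ N := by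
    have htendsto : Tendsto (x + ·) (𝓝 0) (𝓝 x) :=
      Continuous.tendsto' (by fun_prop) _ _ (add_zero x)
    simpa [Function.comp_def] using (hO N).comp_tendsto htendsto
  have hcoeff (N : ℕ) (y : E) : p N (fun _ => y) = 0 := by
    induction N using Nat.strong_induction_on generalizing y with
    | _ N ih =>
      have hsum (z : E) : p.partialSum (N + 1) z = p N fun _ => z := by
        rw [FormalMultilinearSeries.partialSum, Finset.sum_range_succ,
          Finset.sum_eq_zero fun k hk => ih k (Finset.mem_range.1 hk) z, zero_add]
      have hdiff := (hO' (N + 1)).sub (hp.isBigO_sub_partialSum_pow (N + 1))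
      simp only [hsum, sub_sub_cancel] at hdiff
      exact hdiff.continuousMultilinearMap_apply_eq_zero y
  filter_upwards [hp.eventually_hasSum_sub] with y hy
  simpa only [hcoeff] using hy.unique (by simpa only [hcoeff] using hasSum_zero)

/-- The power series at `0` of the quotient of `f x - f (P x)` by a scalar `c` with
`x - P x = c • v`, where `p` is the power series of `f`: telescope `p (n + 1) (x, …, x)` to
`p (n + 1) (P x, …, P x)` one slot at a time, and put `v` into the slot being changed. -/
noncomputable def hadamardQuotientSeries (p : FormalMultilinearSeries 𝕜 E F) (P : E →L[𝕜] E)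
    (v : E) : FormalMultilinearSeries 𝕜 E F := fun n =>
  ∑ i : Fin (n + 1), ((p (n + 1)).curryMid i v).compContinuousLinearMap fun j =>
    if j.castSucc < i then ContinuousLinearMap.id 𝕜 E else P

theorem smul_hadamardQuotientSeries_apply (p : FormalMultilinearSeries 𝕜 E F) {P : E →L[𝕜] E}
    {v x : E} {c : 𝕜} (hx : x - P x = c • v) (n : ℕ) :
    (c • hadamardQuotientSeries p P v n fun _ => x) =
      (p (n + 1) fun _ => x) - p (n + 1) fun _ => P x := by
  have htelescope := (p (n + 1)).toMultilinearMap.map_sub_map_piecewise (fun _ => x)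
    (fun _ => P x) Finset.univ
  simp only [Finset.piecewise_univ, ContinuousMultilinearMap.coe_coe] at htelescope
  rw [htelescope, hadamardQuotientSeries, sum_apply, Finset.smul_sum]
  refine Finset.sum_congr rfl fun i _ => ?_
  rw [ContinuousMultilinearMap.compContinuousLinearMap_apply, ← smul_apply,
    ← ContinuousLinearMap.map_smul, ContinuousMultilinearMap.curryMid_apply]
  congr 1
  refine (Fin.eq_insertNth_iff.2 ⟨by simp [hx], ?_⟩).symm
  ext j
  simp only [Fin.removeNth, Fin.succAbove_lt_iff_castSucc_lt, Fin.ne_succAbove, if_false]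
  split_ifs <;> simp_all

theorem norm_hadamardQuotientSeries_le (p : FormalMultilinearSeries 𝕜 E F) (P : E →L[𝕜] E)
    (v : E) (n : ℕ) :
    ‖hadamardQuotientSeries p P v n‖ ≤
      (n + 1) * (‖p (n + 1)‖ * ‖v‖ * max 1 ‖P‖ ^ n) := by
  have hterm (i : Fin (n + 1)) :
      ‖((p (n + 1)).curryMid i v).compContinuousLinearMap fun j =>
        if j.castSucc < i then ContinuousLinearMap.id 𝕜 E else P‖ ≤
        ‖p (n + 1)‖ * ‖v‖ * max 1 ‖P‖ ^ n := by
    refine (ContinuousMultilinearMap.norm_compContinuousLinearMap_le _ _).trans ?_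
    gcongr
    · refine (ContinuousLinearMap.le_opNorm _ v).trans_eq ?_
      rw [ContinuousMultilinearMap.norm_curryMid]
    · refine (Finset.prod_le_prod (fun _ _ => norm_nonneg _) fun j _ => ?_).trans_eq
        (Fin.prod_const n (max 1 ‖P‖))
      split_ifs
      · exact ContinuousLinearMap.norm_id_le.trans (le_max_left _ _)
      · exact le_max_right _ _
  simpa [hadamardQuotientSeries] using norm_sum_le_of_le Finset.univ fun i _ => hterm i

theorem hadamardQuotientSeries_radius_pos {p : FormalMultilinearSeries 𝕜 E F} (hp : 0 < p.radius)
    (P : E →L[𝕜] E) (v : E) : 0 < (hadamardQuotientSeries p P v).radius := by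
  obtain ⟨C, r, _, hr, hle⟩ := p.le_mul_pow_of_radius_pos hp
  set K := max 1 ‖P‖
  have : 0 < K := lt_max_of_lt_left one_pos
  obtain ⟨s, hs⟩ : ∃ s : NNReal, (s : ℝ) = (2 * r * K)⁻¹ := ⟨⟨_, by positivity⟩, rfl⟩
  have hs0 : 0 < s := NNReal.coe_pos.1 (hs ▸ by positivity)
  refine (ENNReal.coe_pos.2 hs0).trans_le <|
    FormalMultilinearSeries.le_radius_of_bound _ (C * r * ‖v‖) fun n => ?_
  have hn : (n + 1 : ℝ) ≤ 2 ^ n := by exact_mod_cast Nat.lt_two_pow_self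
  calc ‖hadamardQuotientSeries p P v n‖ * (s : ℝ) ^ n
      ≤ ((n + 1) * (‖p (n + 1)‖ * ‖v‖ * K ^ n)) * (s : ℝ) ^ n := by
        gcongr
        exact norm_hadamardQuotientSeries_le p P v n
    _ ≤ (2 ^ n * (C * r ^ (n + 1) * ‖v‖ * K ^ n)) * (s : ℝ) ^ n := by
        gcongr
        exact hle _
    _ = C * r * ‖v‖ * ((2 * r * K) * s) ^ n := by ring
    _ = C * r * ‖v‖ := by
        rw [hs, mul_inv_cancel₀ (by positivity), one_pow, mul_one]

theorem exists_analyticAt_eq_add_smul [CompleteSpace F] {f : E → F} (hf : AnalyticAt 𝕜 f 0)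
    (φ : E →L[𝕜] 𝕜) (v : E) :
    ∃ g : E → F, AnalyticAt 𝕜 g 0 ∧ ∀ᶠ x in 𝓝 0, f x = f (x - φ x • v) + φ x • g x := by
  obtain ⟨p, hp⟩ := hf
  let P : E →L[𝕜] E := ContinuousLinearMap.id 𝕜 E - φ.smulRight v
  have hP (x : E) : x - P x = φ x • v := sub_sub_cancel x (φ x • v)
  have hq := (hadamardQuotientSeries p P v).hasFPowerSeriesOnBall
    (hadamardQuotientSeries_radius_pos hp.radius_pos P v)
  refine ⟨_, hq.analyticAt, ?_⟩
  have hP0 : Tendsto P (𝓝 0) (𝓝 0) := P.continuous.tendsto' _ _ (map_zero P)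
  filter_upwards [hp.eventually_hasSum, hP0.eventually hp.eventually_hasSum,
    hq.eventually_hasSum] with x hfx hfPx hgx
  rw [zero_add] at hfx hfPx hgx
  have hconst : (p 0 fun _ => x) = p 0 fun _ => P x := congrArg (p 0) (Subsingleton.elim _ _)
  have hdiff : HasSum (fun n => φ x • hadamardQuotientSeries p P v n fun _ => x)
      (f x - f (P x)) := by
    simpa [hconst, smul_hadamardQuotientSeries_apply p (hP x)] using
      (hasSum_nat_add_iff' 1).2 (hfx.sub hfPx)
  exact sub_eq_iff_eq_add'.1 (hdiff.unique (hgx.const_smul (φ x)))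

theorem exists_pow_smul_factorization [CompleteSpace F] {ι : Type*} {f : ι → E → F}
    (hf : ∀ i, AnalyticAt 𝕜 (f i) 0) (hne : ∃ i, ¬ ∀ᶠ x in 𝓝 0, f i x = 0)
    (φ : E →L[𝕜] 𝕜) (v : E) :
    ∃ (m : ℕ) (g : ι → E → F), (∀ i, AnalyticAt 𝕜 (g i) 0) ∧
      (∀ i, ∀ᶠ x in 𝓝 0, f i x = φ x ^ m • g i x) ∧
      ∃ i, ¬ ∀ᶠ x in 𝓝 0, g i (x - φ x • v) = 0 := by
  by_contra! hcon
  have hdvd (m : ℕ) : ∃ g : ι → E → F, (∀ i, AnalyticAt 𝕜 (g i) 0) ∧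
      ∀ i, ∀ᶠ x in 𝓝 0, f i x = φ x ^ m • g i x := by
    induction m with
    | zero => exact ⟨f, hf, by simp⟩
    | succ m ih =>
      obtain ⟨g, hg, hfg⟩ := ih
      choose R hR hgR using fun i => exists_analyticAt_eq_add_smul (hg i) φ v
      refine ⟨R, hR, fun i => ?_⟩
      filter_upwards [hfg i, hgR i, hcon m g hg hfg i] with x hfx hgx hgPx
      rw [hfx, hgx, hgPx, zero_add, smul_smul, pow_succ]
  obtain ⟨i, hi⟩ := hne
  refine hi (eventually_eq_zero_of_forall_isBigO_norm_sub_pow (hf i) fun N => ?_)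
  obtain ⟨g, hg, hfg⟩ := hdvd N
  have hφ : (fun x => φ x ^ N) =O[𝓝 0] fun x => ‖x‖ ^ N :=
    (φ.isBigO_id (𝓝 0)).norm_right.pow N
  have hbound := hφ.smul ((hg i).continuousAt.isBigO_one ℝ)
  simpa using hbound.congr' ((hfg i).mono fun x hx => hx.symm) .rfl

end Analytic

/-- The analogue of `IsElemMonomialChange` over an arbitrary `𝕜` in place of `ℝ`. -/
def IsElemMonomialMap {𝕜 : Type*} [Mul 𝕜] {n : ℕ} (σ : (Fin n → 𝕜) → (Fin n → 𝕜)) : Prop :=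
  (∃ e : Equiv.Perm (Fin n), σ = fun x i => x (e i)) ∨
  (∃ r : Fin n, 0 < (r : ℕ) ∧ σ = fun x i => if i < r then x i * x r else x i)

/-- Finite composites of elementary monomial maps. -/
inductive IsMonomialMap {𝕜 : Type*} [Mul 𝕜] {n : ℕ} : ((Fin n → 𝕜) → (Fin n → 𝕜)) → Prop
  | protected id : IsMonomialMap id
  | elem_comp {σ τ : (Fin n → 𝕜) → (Fin n → 𝕜)} :
      IsElemMonomialMap σ → IsMonomialMap τ → IsMonomialMap (σ ∘ τ)

/-- The map `(y, t) ↦ (σ y, t)`, where `t` is the last coordinate. -/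
def onInit {α : Type*} {n : ℕ} (σ : (Fin n → α) → (Fin n → α)) (x : Fin (n + 1) → α) :
    Fin (n + 1) → α :=
  Fin.snoc (α := fun _ => α) (σ (Fin.init x)) (x (Fin.last n))

theorem onInit_id {α : Type*} {n : ℕ} : onInit (id : (Fin n → α) → (Fin n → α)) = id :=
  funext fun x => Fin.snoc_init_self x

theorem onInit_comp {α : Type*} {n : ℕ} (σ τ : (Fin n → α) → (Fin n → α)) :
    onInit (σ ∘ τ) = onInit σ ∘ onInit τ :=
  funext fun x => by simp [onInit]

section Mul

variable {𝕜 : Type*} [Mul 𝕜] {n : ℕ} {σ τ : (Fin n → 𝕜) → (Fin n → 𝕜)}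

theorem IsElemMonomialMap.isMonomialMap (hσ : IsElemMonomialMap σ) : IsMonomialMap σ :=
  .elem_comp hσ .id

theorem isElemMonomialMap_perm (e : Equiv.Perm (Fin n)) :
    IsElemMonomialMap fun (x : Fin n → 𝕜) i => x (e i) :=
  Or.inl ⟨e, rfl⟩

protected theorem IsMonomialMap.comp (hσ : IsMonomialMap σ) (hτ : IsMonomialMap τ) :
    IsMonomialMap (σ ∘ τ) := by
  induction hσ with
  | id => exact hτ
  | elem_comp hρ _ ih => exact .elem_comp (τ := _ ∘ τ) hρ ih

theorem IsMonomialMap.exists_foldr_comp_eq (hσ : IsMonomialMap σ) :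
    ∃ L : List ((Fin n → 𝕜) → (Fin n → 𝕜)),
      (∀ τ ∈ L, IsElemMonomialMap τ) ∧ L.foldr (· ∘ ·) id = σ := by
  induction hσ with
  | id => exact ⟨[], by simp⟩
  | elem_comp hσ _ ih =>
    obtain ⟨L, hL, rfl⟩ := ih
    exact ⟨_ :: L, List.forall_mem_cons.2 ⟨hσ, hL⟩, rfl⟩

protected theorem IsElemMonomialMap.onInit (hσ : IsElemMonomialMap σ) :
    IsElemMonomialMap (onInit σ) := by
  obtain ⟨e, rfl⟩ | ⟨r, hr, rfl⟩ := hσ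
  · refine Or.inl ⟨finSuccEquivLast.symm.permCongr (Equiv.optionCongr e), funext₂ fun x j => ?_⟩
    induction j using Fin.lastCases <;> simp [onInit, Fin.init]
  · refine Or.inr ⟨r.castSucc, hr, funext₂ fun x j => ?_⟩
    induction j using Fin.lastCases <;> simp [onInit, Fin.init, Fin.le_last]

protected theorem IsMonomialMap.onInit (hσ : IsMonomialMap σ) : IsMonomialMap (onInit σ) := by
  induction hσ with
  | id => exact onInit_id (α := 𝕜) ▸ .id
  | elem_comp hσ _ ih => exact onInit_comp (α := 𝕜) _ _ ▸ .elem_comp hσ.onInit ih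

theorem isMonomialMap_update_mul {i k : Fin n} (hik : i ≠ k) :
    IsMonomialMap fun x : Fin n → 𝕜 => Function.update x i (x i * x k) := by
  obtain ⟨n, rfl⟩ : ∃ m, n = m + 2 := ⟨n - 2, by omega⟩
  obtain ⟨e, rfl, rfl⟩ : ∃ e : Equiv.Perm (Fin (n + 2)), e 0 = i ∧ e 1 = k :=
    MulAction.is_two_pretransitive_iff.1 (Equiv.Perm.isMultiplyPretransitive _ 2)
      Fin.zero_ne_one hik
  have hσ : IsElemMonomialMap fun (x : Fin (n + 2) → 𝕜) j => if j < 1 then x j * x 1 else x j :=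
    Or.inr ⟨1, by simp, rfl⟩
  convert IsMonomialMap.elem_comp (isElemMonomialMap_perm e.symm)
    (.elem_comp hσ (isElemMonomialMap_perm e).isMonomialMap) using 1
  funext x j
  obtain ⟨j, rfl⟩ := e.surjective j
  by_cases hj : j = 0 <;> simp [Fin.lt_one_iff, hj]

end Mul

section MulZeroClass

variable {𝕜 : Type*} [MulZeroClass 𝕜] {n : ℕ} {σ : (Fin n → 𝕜) → (Fin n → 𝕜)}

theorem IsElemMonomialMap.map_zero (hσ : IsElemMonomialMap σ) : σ 0 = 0 := by
  obtain ⟨e, rfl⟩ | ⟨r, -, rfl⟩ := hσ <;> ext i <;> simp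

theorem IsMonomialMap.map_zero (hσ : IsMonomialMap σ) : σ 0 = 0 := by
  induction hσ with
  | id => rfl
  | elem_comp hσ _ ih => rw [Function.comp_apply, ih, hσ.map_zero]

end MulZeroClass

section CommMonoid

variable {𝕜 : Type*} [CommMonoid 𝕜] {n : ℕ}

/-- The monomial map `(y, t) ↦ (y, t * ∏ k, y k ^ d k)`, where `t` is the last coordinate. -/
def scaleLast (d : Fin n → ℕ) (x : Fin (n + 1) → 𝕜) : Fin (n + 1) → 𝕜 :=
  Fin.snoc (α := fun _ => 𝕜) (Fin.init x) (x (Fin.last n) * ∏ k, Fin.init x k ^ d k)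

theorem scaleLast_zero : (scaleLast 0 : (Fin (n + 1) → 𝕜) → _) = id :=
  funext fun x => by simp [scaleLast]

theorem scaleLast_add (d e : Fin n → ℕ) :
    (scaleLast (d + e) : (Fin (n + 1) → 𝕜) → _) = scaleLast d ∘ scaleLast e :=
  funext fun x => by
    simp [scaleLast, pow_add, Finset.prod_mul_distrib, mul_left_comm, mul_comm]

theorem scaleLast_single (k : Fin n) :
    (scaleLast (Pi.single k 1) : (Fin (n + 1) → 𝕜) → _) =
      fun x => Function.update x (Fin.last n) (x (Fin.last n) * x k.castSucc) := by
  funext x j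
  induction j using Fin.lastCases <;> simp [scaleLast, Pi.single_apply, Fin.init]

theorem isMonomialMap_scaleLast (d : Fin n → ℕ) :
    IsMonomialMap (scaleLast d : (Fin (n + 1) → 𝕜) → _) := by
  induction d using Pi.single_induction with
  | zero => exact scaleLast_zero (𝕜 := 𝕜) ▸ .id
  | add d e hd he => exact scaleLast_add (𝕜 := 𝕜) d e ▸ hd.comp he
  | single k m =>
    induction m with
    | zero => exact Pi.single_zero (M := fun _ => ℕ) k ▸ scaleLast_zero (𝕜 := 𝕜) ▸ .id
    | succ m ih =>
      rw [Pi.single_add, scaleLast_add, scaleLast_single]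
      exact ih.comp (isMonomialMap_update_mul (Fin.castSucc_ne_last k).symm)

end CommMonoid

section FinSnoc

variable {n : ℕ}

theorem snoc_zero_zero {M : Type*} [Zero M] : (Fin.snoc (0 : Fin n → M) 0 : Fin (n + 1) → M) = 0 :=
  funext fun j => by induction j using Fin.lastCases <;> simp

theorem snoc_init_zero {R : Type*} [Ring R] (x : Fin (n + 1) → R) :
    (Fin.snoc (Fin.init x) 0 : Fin (n + 1) → R) =
      x - x (Fin.last n) • Pi.single (Fin.last n) 1 :=
  funext fun j => by induction j using Fin.lastCases <;> simp [Fin.init]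

theorem tendsto_init_nhds_zero {M : Type*} [Zero M] [TopologicalSpace M] :
    Tendsto (Fin.init : (Fin (n + 1) → M) → Fin n → M) (𝓝 0) (𝓝 0) :=
  continuous_id.finInit.tendsto' 0 0 rfl

variable {𝕜 E : Type*} [NontriviallyNormedField 𝕜] [NormedAddCommGroup E] [NormedSpace 𝕜 E]

theorem analyticAt_apply {ι : Type*} [Fintype ι] (i : ι) (x : ι → E) :
    AnalyticAt 𝕜 (fun x => x i) x :=
  (ContinuousLinearMap.proj (R := 𝕜) (φ := fun _ => E) i).analyticAt x

theorem analyticAt_init (x : Fin (n + 1) → E) :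
    AnalyticAt 𝕜 (Fin.init : (Fin (n + 1) → E) → Fin n → E) x :=
  analyticAt_pi_iff.2 fun i => analyticAt_apply i.castSucc x

theorem analyticAt_snoc_const (c : E) (y : Fin n → E) :
    AnalyticAt 𝕜 (fun y => (Fin.snoc y c : Fin (n + 1) → E)) y :=
  analyticAt_pi_iff.2 fun j => by
    induction j using Fin.lastCases with
    | last => simpa only [Fin.snoc_last] using analyticAt_const
    | cast i => simpa only [Fin.snoc_castSucc] using analyticAt_apply i y

end FinSnoc

section Regularization

variable {𝕜 F : Type*} [NontriviallyNormedField 𝕜] [NormedAddCommGroup F] [NormedSpace 𝕜 F]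
  {n : ℕ}

theorem IsElemMonomialMap.analyticAt {σ : (Fin n → 𝕜) → (Fin n → 𝕜)} (hσ : IsElemMonomialMap σ)
    (x : Fin n → 𝕜) : AnalyticAt 𝕜 σ x := by
  obtain ⟨e, rfl⟩ | ⟨r, -, rfl⟩ := hσ <;> refine analyticAt_pi_iff.2 fun i => ?_
  · exact analyticAt_apply (e i) x
  · split_ifs
    · exact (analyticAt_apply i x).mul (analyticAt_apply r x)
    · exact analyticAt_apply i x

theorem IsMonomialMap.analyticAt {σ : (Fin n → 𝕜) → (Fin n → 𝕜)} (hσ : IsMonomialMap σ)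
    (x : Fin n → 𝕜) : AnalyticAt 𝕜 σ x := by
  induction hσ with
  | id => exact analyticAt_id
  | elem_comp hσ _ ih => exact (hσ.analyticAt _).comp ih

theorem IsMonomialMap.tendsto_zero {σ : (Fin n → 𝕜) → (Fin n → 𝕜)} (hσ : IsMonomialMap σ) :
    Tendsto σ (𝓝 0) (𝓝 0) := by
  simpa only [ContinuousAt, hσ.map_zero] using (hσ.analyticAt 0).continuousAt

theorem exists_eq_snoc_init_zero_add_smul [CompleteSpace F] {f : (Fin (n + 1) → 𝕜) → F}
    (hf : AnalyticAt 𝕜 f 0) :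
    ∃ g : (Fin (n + 1) → 𝕜) → F, AnalyticAt 𝕜 g 0 ∧
      ∀ᶠ x in 𝓝 0, f x = f (Fin.snoc (Fin.init x) 0) + x (Fin.last n) • g x := by
  simpa only [snoc_init_zero, ContinuousLinearMap.proj_apply] using exists_analyticAt_eq_add_smul hf
    (ContinuousLinearMap.proj (R := 𝕜) (Fin.last n)) (Pi.single (Fin.last n) 1)

theorem exists_last_pow_smul_factorization [CompleteSpace F] {ι : Type*}
    {f : ι → (Fin (n + 1) → 𝕜) → F} (hf : ∀ i, AnalyticAt 𝕜 (f i) 0)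
    (hne : ∃ i, ¬ ∀ᶠ x in 𝓝 0, f i x = 0) :
    ∃ (m : ℕ) (g : ι → (Fin (n + 1) → 𝕜) → F), (∀ i, AnalyticAt 𝕜 (g i) 0) ∧
      (∀ i, ∀ᶠ x in 𝓝 0, f i x = x (Fin.last n) ^ m • g i x) ∧
      ∃ i, ¬ ∀ᶠ y in 𝓝 0, g i (Fin.snoc y 0) = 0 := by
  obtain ⟨m, g, hg, hfg, i, hi⟩ := exists_pow_smul_factorization hf hne
    (ContinuousLinearMap.proj (R := 𝕜) (Fin.last n)) (Pi.single (Fin.last n) 1)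
  refine ⟨m, g, hg, hfg, i, fun hy => hi ?_⟩
  simpa only [snoc_init_zero, ContinuousLinearMap.proj_apply] using
    tendsto_init_nhds_zero.eventually hy

theorem exists_factorization_comp_scaleLast [CompleteSpace F] {g : (Fin (n + 1) → 𝕜) → F}
    (hg : AnalyticAt 𝕜 g 0) {σ : (Fin n → 𝕜) → (Fin n → 𝕜)} (hσ : IsMonomialMap σ)
    {d : Fin n → ℕ} {q : (Fin n → 𝕜) → F} (hq : AnalyticAt 𝕜 q 0)
    (hgq : ∀ᶠ y in 𝓝 0, g (Fin.snoc (σ y) 0) = (∏ k, y k ^ d k) • q y) :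
    ∃ Q : (Fin (n + 1) → 𝕜) → F, AnalyticAt 𝕜 Q 0 ∧ Q 0 = q 0 ∧
      ∀ᶠ x in 𝓝 0, g (onInit σ (scaleLast d x)) = (∏ k, x (Fin.castSucc k) ^ d k) • Q x := by
  have hτ : IsMonomialMap (scaleLast d : (Fin (n + 1) → 𝕜) → _) := isMonomialMap_scaleLast d
  obtain ⟨R, hR, hgR⟩ := exists_eq_snoc_init_zero_add_smul
    (hg.comp_of_eq (hσ.onInit.analyticAt 0) hσ.onInit.map_zero)
  have hqinit := hq.comp_of_eq (analyticAt_init (0 : Fin (n + 1) → 𝕜)) rfl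
  have hRτ := hR.comp_of_eq (hτ.analyticAt 0) hτ.map_zero
  refine ⟨fun x => q (Fin.init x) + x (Fin.last n) • R (scaleLast d x), ?_, ?_, ?_⟩
  · exact hqinit.add ((analyticAt_apply (Fin.last n) 0).smul hRτ)
  · change q 0 + (0 : 𝕜) • _ = q 0
    rw [zero_smul, add_zero]
  · filter_upwards [hτ.tendsto_zero.eventually hgR,
      tendsto_init_nhds_zero.eventually hgq] with x hx hy
    have hx' : g (onInit σ (scaleLast d x)) = g (Fin.snoc (σ (Fin.init x)) 0) +
        (x (Fin.last n) * ∏ k, Fin.init x k ^ d k) • R (scaleLast d x) := by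
      simpa [onInit, scaleLast] using hx
    rw [hx', hy, smul_add, smul_smul, mul_comm (x _)]
    rfl

theorem exists_isMonomialMap_factorization [CompleteSpace F] {ι : Type*} {n : ℕ}
    {f : ι → (Fin n → 𝕜) → F} (hf : ∀ i, AnalyticAt 𝕜 (f i) 0)
    (hne : ∃ i, ¬ ∀ᶠ x in 𝓝 0, f i x = 0) :
    ∃ (σ : (Fin n → 𝕜) → (Fin n → 𝕜)) (d : Fin n → ℕ) (g : ι → (Fin n → 𝕜) → F),
      IsMonomialMap σ ∧ (∀ i, AnalyticAt 𝕜 (g i) 0) ∧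
      (∀ i, ∀ᶠ x in 𝓝 0, f i (σ x) = (∏ k, x k ^ d k) • g i x) ∧ ∃ j, g j 0 ≠ 0 := by
  induction n with
  | zero =>
    obtain ⟨j, hj⟩ := hne
    refine ⟨id, 0, f, .id, hf, by simp, j, fun h => hj (.of_forall fun x => ?_)⟩
    rwa [Subsingleton.elim x 0]
  | succ n ih =>
    obtain ⟨m, g, hg, hfg, hne'⟩ := exists_last_pow_smul_factorization hf hne
    obtain ⟨σ, d, q, hσ, hq, hgq, j, hj⟩ := ih (f := fun i y => g i (Fin.snoc y 0))
      (fun i => (hg i).comp_of_eq (analyticAt_snoc_const 0 0) snoc_zero_zero) hne'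
    choose Q hQ hQ0 hgQ using fun i =>
      exists_factorization_comp_scaleLast (hg i) hσ (hq i) (hgq i)
    have hτ := hσ.onInit.comp (isMonomialMap_scaleLast d)
    refine ⟨onInit σ ∘ scaleLast d, Fin.snoc (α := fun _ => ℕ) ((m + 1) • d) m, Q, hτ, hQ,
      fun i => ?_, j, hQ0 j ▸ hj⟩
    filter_upwards [hτ.tendsto_zero.eventually (hfg i), hgQ i] with x hfx hgx
    have hlast : (onInit σ ∘ scaleLast d) x (Fin.last n) =
        x (Fin.last n) * ∏ k, x (Fin.castSucc k) ^ d k := by simp [onInit, scaleLast, Fin.init]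
    rw [hfx, hlast, Function.comp_apply, hgx, smul_smul, Fin.prod_univ_castSucc]
    congr 1
    simp only [Fin.snoc_castSucc, Fin.snoc_last, Pi.smul_apply, smul_eq_mul, pow_mul',
      Finset.prod_pow]
    ring

theorem monomial_regularization_general [CompleteSpace F] {ι : Type*} [Finite ι]
    {U : Set (Fin n → 𝕜)} (hU : U ∈ 𝓝 0) {h : ι → (Fin n → 𝕜) → F}
    (han : ∀ i, AnalyticAt 𝕜 (h i) 0) (hnz : ∃ i, ¬ ∀ᶠ x in 𝓝 0, h i x = 0) :
    ∃ (L : List ((Fin n → 𝕜) → (Fin n → 𝕜))) (d : Fin n → ℕ)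
      (V : Set (Fin n → 𝕜)) (ht : ι → (Fin n → 𝕜) → F),
      (∀ σ ∈ L, IsElemMonomialMap σ) ∧
      IsOpen V ∧ (0 : Fin n → 𝕜) ∈ V ∧
      (L.foldr (· ∘ ·) id) '' V ⊆ U ∧
      (∀ i, AnalyticOnNhd 𝕜 (ht i) V) ∧
      (∀ z ∈ V, ∀ i, h i (L.foldr (· ∘ ·) id z) = (∏ k, z k ^ d k) • ht i z) ∧
      (∃ j, ht j 0 ≠ 0) := by
  obtain ⟨σ, d, ht, hσ, hht, hfac, hj⟩ := exists_isMonomialMap_factorization han hnz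
  have hev : ∀ᶠ z in 𝓝 0, σ z ∈ U ∧ (∀ i, AnalyticAt 𝕜 (ht i) z) ∧
      ∀ i, h i (σ z) = (∏ k, z k ^ d k) • ht i z :=
    (hσ.tendsto_zero.eventually_mem hU).and <|
      (eventually_all.2 fun i => (hht i).eventually_analyticAt).and (eventually_all.2 hfac)
  obtain ⟨V, hV, hVo, hV0⟩ := eventually_nhds_iff.1 hev
  obtain ⟨L, hL, rfl⟩ := hσ.exists_foldr_comp_eq
  exact ⟨L, d, V, ht, hL, hVo, hV0, Set.image_subset_iff.2 fun z hz => (hV z hz).1,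
    fun i z hz => (hV z hz).2.1 i, fun z hz => (hV z hz).2.2, hj⟩

end Regularization

/-- Corollary 5 of the paper: monomial regularization. Given real
analytic functions `h₀, …, h_r` on an open neighborhood `U` of `0 ∈ ℝⁿ`, not all with
identically zero germ at the origin, there is a finite composite `σ̄` of elementary
monomial coordinate changes, an exponent vector `d`, a neighborhood `V` of `0` with
`σ̄(V) ⊆ U`, and real analytic functions `h̃₀, …, h̃_r` on `V` with
`hᵢ(σ̄ z) = z₁^{d₁} ⋯ zₙ^{dₙ} · h̃ᵢ(z)` on `V` and `h̃_j(0) ≠ 0` for some `j`. -/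
theorem monomial_regularization
    (n r : ℕ) (U : Set (Fin n → ℝ)) (hU : IsOpen U) (h0 : (0 : Fin n → ℝ) ∈ U)
    (h : Fin (r + 1) → (Fin n → ℝ) → ℝ)
    (han : ∀ i, AnalyticOnNhd ℝ (h i) U)
    (hnz : ∃ i, ¬ (∀ᶠ x in nhds (0 : Fin n → ℝ), h i x = 0)) :
    ∃ (L : List ((Fin n → ℝ) → (Fin n → ℝ))) (d : Fin n → ℕ)
      (V : Set (Fin n → ℝ)) (ht : Fin (r + 1) → (Fin n → ℝ) → ℝ),
      (∀ σ ∈ L, IsElemMonomialChange σ) ∧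
      IsOpen V ∧ (0 : Fin n → ℝ) ∈ V ∧
      (L.foldr (· ∘ ·) id) '' V ⊆ U ∧
      (∀ i, AnalyticOnNhd ℝ (ht i) V) ∧
      (∀ z ∈ V, ∀ i, h i (L.foldr (· ∘ ·) id z) = (∏ k, z k ^ d k) * ht i z) ∧
      (∃ j, ht j 0 ≠ 0) :=
  monomial_regularization_general (hU.mem_nhds h0) (fun i => han i 0 h0) hnz
end
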